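/- Let ‖·‖ be a decomposable norm on ℝ^n all of whose unit-ball extreme points have ‖·‖_u-norm equal to 1, and define K(x) = ‖e_x‖_u². Then K is sublinear: for all x, y ∈ ℝ^n, K(x + y) ≤ K(x) + K(y). -/

import Mathlib

/-!
Call a point `a` with `N a ≤ 1` and `‖a‖ᵤ = 1` an atom. As all extreme points of the unit ball are
atoms, `‖·‖ᵤ ≤ N`, hence atoms also lie in the dual unit ball, and every linear functional attains
its maximum over the unit ball at an atom. Decomposability at an atom `a` says that the face of the
dual ball exposed by `a` is `a` plus the dual unit ball of a subspace `V a ⊆ aᗮ`.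

Splitting off maximizing atoms one at a time gives every `x` an analogue of a singular value
decomposition, a `Frame`: `x = ∑ γᵢ aᵢ` with positive decreasing `γᵢ` and orthonormal atoms `aᵢ`
(`Setting.exists_frame`). Then `e x = ∑ aᵢ`, so that `K x` is the number of terms, the rank of `x`
(`Frame.Kfun_eq`), and the partial sums of the `aᵢ` satisfy a Ky Fan maximum principle
(`Frame.ip_le`). Sums of atoms of frames are the tripotents, the points `p` of the dual unit ball
with `N p = ‖p‖ᵤ²`; differences of nested tripotents are tripotents (`Trip.sub`).

The key step is `Trip.le_Kfun`: if `⟪x, c⟫ > 0` for all atoms `c` supported by a tripotent `p` (that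
is, `⟪p, c⟫ = 1`), then `‖p‖ᵤ² ≤ K x`. Suppose the rank `k` of `p` exceeds that of `x`, and let
`φ t` be the `k`-th coefficient of a frame of `x + t p`. Then `φ 0 = 0`, and a telescoping estimate
of Riemann sum type shows `φ t ≤ t`. On the other hand
`φ t ≥ t + ⟪x, p⟫ - ⟪x, u t⟫`, where `u t` is the tripotent of rank at most `k - 1` maximizing
`⟪x + t p, ·⟫`. A limit point `d` of `u t` as `t → ∞` is dominated by `p`, has rank `k - 1` and
satisfies `⟪x, p⟫ ≤ ⟪x, d⟫`, so that `p - d` is an atom supported by `p` on which `x` is not positive.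

For subadditivity, put `q = e (x + y)`. The functional `⟪x + y, ·⟫` is positive on atoms supported
by `q`. Among the orthogonal splittings `q = p + (q - p)` into tripotents (`Split`), choose one
maximizing `⟪x - y, p⟫`. Any atom supported by one part can be moved to the other, so maximality
gives `⟪x - y, c⟫ ≥ 0` for atoms `c` supported by `p` and `⟪x - y, c⟫ ≤ 0` for those supported by
`q - p`. Thus the key step applies to `x, p` and to `y, q - p`, and
`K (x + y) = ‖q‖ᵤ² = ‖p‖ᵤ² + ‖q - p‖ᵤ² ≤ K x + K y`.
-/

open Matrix

namespace PGH

variable {n m : ℕ}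

/-- The inner product `⟪x, y⟫ = xᵀ B y` on `ℝⁿ` induced by a matrix `B`. -/
def ip (B : Matrix (Fin n) (Fin n) ℝ) (x y : Fin n → ℝ) : ℝ :=
  dotProduct x (B.mulVec y)

/-- The norm `‖x‖ᵤ = √(xᵀ B x)` induced by the inner product. -/
noncomputable def normu (B : Matrix (Fin n) (Fin n) ℝ) (x : Fin n → ℝ) : ℝ :=
  Real.sqrt (ip B x x)

/-- `N` is a norm on `ℝⁿ`. -/
structure IsNorm (N : (Fin n → ℝ) → ℝ) : Prop where
  nonneg : ∀ x, 0 ≤ N x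
  eq_zero_iff : ∀ x, N x = 0 ↔ x = 0
  triangle : ∀ x y, N (x + y) ≤ N x + N y
  smul_eq : ∀ (c : ℝ) (x), N (c • x) = |c| * N x

/-- The dual norm `‖y‖* = sup {⟪y, x⟫ : N x ≤ 1}`. -/
noncomputable def dualNorm (B : Matrix (Fin n) (Fin n) ℝ) (N : (Fin n → ℝ) → ℝ)
    (y : Fin n → ℝ) : ℝ :=
  sSup ((fun x => ip B y x) '' {x | N x ≤ 1})

/-- The subdifferential of `N` at `x` with respect to `⟪·,·⟫`. -/
def subdiff (B : Matrix (Fin n) (Fin n) ℝ) (N : (Fin n → ℝ) → ℝ) (x : Fin n → ℝ) :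
    Set (Fin n → ℝ) :=
  {z | ∀ y, N x + ip B z (y - x) ≤ N y}

/-- The set `G` of extreme points of the unit ball of `N`. -/
def extPts (N : (Fin n → ℝ) → ℝ) : Set (Fin n → ℝ) :=
  Set.extremePoints ℝ {x | N x ≤ 1}

/-- The orthogonal complement (w.r.t. `⟪·,·⟫`) of a subspace `T`, as a set. -/
def perp (B : Matrix (Fin n) (Fin n) ℝ) (T : Submodule ℝ (Fin n → ℝ)) :
    Set (Fin n → ℝ) :=
  {v | ∀ u ∈ T, ip B u v = 0}

/-- A decomposability structure for the norm `N`: for every `x` there are a subspace `T x`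
and a vector `e x ∈ T x` with `∂N(x) = {e x + v : v ∈ (T x)ᗮ, ‖v‖* ≤ 1}`. -/
structure DecompStruct (B : Matrix (Fin n) (Fin n) ℝ) (N : (Fin n → ℝ) → ℝ) where
  T : (Fin n → ℝ) → Submodule ℝ (Fin n → ℝ)
  e : (Fin n → ℝ) → (Fin n → ℝ)
  e_mem : ∀ x, e x ∈ T x
  subdiff_eq : ∀ x, subdiff B N x =
    {ξ | ∃ v ∈ perp B (T x), dualNorm B N v ≤ 1 ∧ ξ = e x + v}

/-- `K x = ‖e x‖ᵤ²`. -/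
noncomputable def Kfun (B : Matrix (Fin n) (Fin n) ℝ) (N : (Fin n → ℝ) → ℝ)
    (D : DecompStruct B N) (x : Fin n → ℝ) : ℝ :=
  (normu B (D.e x)) ^ 2

/-- Squared Euclidean norm `‖v‖₂²` on `ℝᵐ`. -/
def sq2 (v : Fin m → ℝ) : ℝ := dotProduct v v

/-- The least-squares loss `f(x) = ½ ‖A x - b‖₂²`. -/
noncomputable def fls (A : Matrix (Fin m) (Fin n) ℝ) (b : Fin m → ℝ) (x : Fin n → ℝ) : ℝ :=
  (1 / 2) * sq2 (A.mulVec x - b)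

/-- The adjoint `A* = B⁻¹ Aᵀ` of `A` w.r.t. `⟪·,·⟫`. -/
noncomputable def Astar (B : Matrix (Fin n) (Fin n) ℝ) (A : Matrix (Fin m) (Fin n) ℝ) :
    Matrix (Fin n) (Fin m) ℝ := B⁻¹ * Aᵀ

/-- The gradient `∇f(x) = A*(A x - b)` of the least-squares loss w.r.t. `⟪·,·⟫`. -/
noncomputable def gradf (B : Matrix (Fin n) (Fin n) ℝ) (A : Matrix (Fin m) (Fin n) ℝ)
    (b : Fin m → ℝ) (x : Fin n → ℝ) : Fin n → ℝ :=
  (Astar B A).mulVec (A.mulVec x - b)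

/-- `ρ` is a valid lower restricted isometry constant of `A` at level `k`. -/
def IsLowerRIP (B : Matrix (Fin n) (Fin n) ℝ) (N : (Fin n → ℝ) → ℝ)
    (A : Matrix (Fin m) (Fin n) ℝ) (k ρ : ℝ) : Prop :=
  0 < ρ ∧ ∀ x : Fin n → ℝ, (N x) ^ 2 ≤ k * (normu B x) ^ 2 →
    ρ * (normu B x) ^ 2 ≤ sq2 (A.mulVec x)

/-- `ρ` is a valid upper restricted isometry constant of `A` at level `k`. -/
def IsUpperRIP (B : Matrix (Fin n) (Fin n) ℝ) (N : (Fin n → ℝ) → ℝ)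
    (A : Matrix (Fin m) (Fin n) ℝ) (k ρ : ℝ) : Prop :=
  0 < ρ ∧ ∀ x : Fin n → ℝ, (N x) ^ 2 ≤ k * (normu B x) ^ 2 →
    sq2 (A.mulVec x) ≤ ρ * (normu B x) ^ 2

/-- The regularized objective `φ_λ(x) = f(x) + λ N(x)`. -/
noncomputable def phi (A : Matrix (Fin m) (Fin n) ℝ) (b : Fin m → ℝ)
    (N : (Fin n → ℝ) → ℝ) (lam : ℝ) (x : Fin n → ℝ) : ℝ :=
  fls A b x + lam * N x

/-- The proximal model `m_{λ,L}(y, x)`. -/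
noncomputable def mdl (B : Matrix (Fin n) (Fin n) ℝ) (A : Matrix (Fin m) (Fin n) ℝ)
    (b : Fin m → ℝ) (N : (Fin n → ℝ) → ℝ) (lam L : ℝ) (y x : Fin n → ℝ) : ℝ :=
  fls A b y + ip B (gradf B A b y) (x - y) + (L / 2) * (normu B (x - y)) ^ 2 + lam * N x

/-- `xp = Prox_{λ,L}(y)`, i.e. `xp` minimizes `m_{λ,L}(y, ·)`. -/
def IsProx (B : Matrix (Fin n) (Fin n) ℝ) (A : Matrix (Fin m) (Fin n) ℝ)
    (b : Fin m → ℝ) (N : (Fin n → ℝ) → ℝ) (lam L : ℝ) (y xp : Fin n → ℝ) : Prop :=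
  ∀ u, mdl B A b N lam L y xp ≤ mdl B A b N lam L y u

/-- `ω_λ(x) = min_{ξ ∈ ∂N(x)} ‖λ ξ + ∇f(x)‖*`. -/
noncomputable def omega (B : Matrix (Fin n) (Fin n) ℝ) (A : Matrix (Fin m) (Fin n) ℝ)
    (b : Fin m → ℝ) (N : (Fin n → ℝ) → ℝ) (lam : ℝ) (x : Fin n → ℝ) : ℝ :=
  sInf ((fun ξ => dualNorm B N (lam • ξ + gradf B A b x)) '' subdiff B N x)

/-- Assumption 1 of the paper, phrased for given valid restricted isometry constants
`ρlow = ρ₋(A, c k₀ (1+γ)²)`, `ρlow2 = ρ₋(A, 72 r c k₀ (1+γ) γinc)` and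
`ρup2 = ρ₊(A, 72 r c k₀ (1+γ) γinc)`. -/
def Assumption1 (B : Matrix (Fin n) (Fin n) ℝ) (N : (Fin n → ℝ) → ℝ)
    (A : Matrix (Fin m) (Fin n) ℝ) (z : Fin m → ℝ)
    (c k₀ γinc lamtgt r δ γ ρlow ρlow2 ρup2 : ℝ) : Prop :=
  dualNorm B N ((Astar B A).mulVec z) ≤ lamtgt / 4 ∧
  1 < r ∧ 0 < δ ∧ δ ≤ 1 / 4 ∧
  γ = (lamtgt * (1 + δ) + dualNorm B N ((Astar B A).mulVec z)) /
      (lamtgt * (1 - δ) - dualNorm B N ((Astar B A).mulVec z)) ∧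
  IsLowerRIP B N A (c * k₀ * (1 + γ) ^ 2) ρlow ∧
  IsLowerRIP B N A (72 * r * c * k₀ * (1 + γ) * γinc) ρlow2 ∧
  IsUpperRIP B N A (72 * r * c * k₀ * (1 + γ) * γinc) ρup2 ∧
  ρlow / ρup2 > c / r

/-- One backtracking step: `M` is the smallest element of `{Lt γinc^j : j ≥ 0}`
for which the proximal point is accepted, and `xt1` is that proximal point. -/
def BacktrackMin (B : Matrix (Fin n) (Fin n) ℝ) (A : Matrix (Fin m) (Fin n) ℝ)
    (b : Fin m → ℝ) (N : (Fin n → ℝ) → ℝ) (lam γinc Lt : ℝ)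
    (xt : Fin n → ℝ) (M : ℝ) (xt1 : Fin n → ℝ) : Prop :=
  (∃ j : ℕ, M = Lt * γinc ^ j) ∧
  IsProx B A b N lam M xt xt1 ∧
  phi A b N lam xt1 ≤ mdl B A b N lam M xt xt1 ∧
  ∀ j : ℕ, Lt * γinc ^ j < M →
    ∀ u, IsProx B A b N lam (Lt * γinc ^ j) xt u →
      ¬ phi A b N lam u ≤ mdl B A b N lam (Lt * γinc ^ j) xt u

/-- The iterates of the proximal-gradient subroutine with backtracking. -/
structure ProxGradSeq (B : Matrix (Fin n) (Fin n) ℝ) (A : Matrix (Fin m) (Fin n) ℝ)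
    (b : Fin m → ℝ) (N : (Fin n → ℝ) → ℝ) (lam γinc γdec Lmin : ℝ)
    (x : ℕ → Fin n → ℝ) (L M : ℕ → ℝ) : Prop where
  step : ∀ t, BacktrackMin B A b N lam γinc (L t) (x t) (M (t + 1)) (x (t + 1))
  Lupdate : ∀ t, L (t + 1) = max Lmin (M (t + 1) / γdec)

/-- The quantity `‖M (x⁻ - x) + ∇f(x) - ∇f(x⁻)‖*` used in the stopping criterion. -/
noncomputable def stopQ (B : Matrix (Fin n) (Fin n) ℝ) (A : Matrix (Fin m) (Fin n) ℝ)
    (b : Fin m → ℝ) (N : (Fin n → ℝ) → ℝ) (Mt : ℝ) (xprev xcur : Fin n → ℝ) : ℝ :=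
  dualNorm B N (Mt • (xprev - xcur) + (gradf B A b xcur - gradf B A b xprev))

/-! ### The inner product -/

section InnerProduct

variable (B : Matrix (Fin n) (Fin n) ℝ)

lemma ip_add_left (x y z : Fin n → ℝ) : ip B (x + y) z = ip B x z + ip B y z := by
  simp [ip, add_dotProduct]

lemma ip_add_right (x y z : Fin n → ℝ) : ip B x (y + z) = ip B x y + ip B x z := by
  simp [ip, mulVec_add, dotProduct_add]

lemma ip_smul_left (c : ℝ) (x y : Fin n → ℝ) : ip B (c • x) y = c * ip B x y := by
  simp [ip, smul_dotProduct]

lemma ip_smul_right (c : ℝ) (x y : Fin n → ℝ) : ip B x (c • y) = c * ip B x y := by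
  simp [ip, mulVec_smul, dotProduct_smul]

lemma ip_neg_left (x y : Fin n → ℝ) : ip B (-x) y = -ip B x y := by
  simp [ip]

lemma ip_neg_right (x y : Fin n → ℝ) : ip B x (-y) = -ip B x y := by
  simp [ip, mulVec_neg]

lemma ip_sub_left (x y z : Fin n → ℝ) : ip B (x - y) z = ip B x z - ip B y z := by
  simp [ip, sub_dotProduct]

lemma ip_sub_right (x y z : Fin n → ℝ) : ip B x (y - z) = ip B x y - ip B x z := by
  simp [ip, mulVec_sub, dotProduct_sub]

lemma ip_zero_left (x : Fin n → ℝ) : ip B 0 x = 0 := by simp [ip]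

lemma ip_zero_right (x : Fin n → ℝ) : ip B x 0 = 0 := by simp [ip]

lemma ip_sum_left {ι : Type*} (s : Finset ι) (f : ι → Fin n → ℝ) (y : Fin n → ℝ) :
    ip B (∑ i ∈ s, f i) y = ∑ i ∈ s, ip B (f i) y := by
  simp [ip, sum_dotProduct]

lemma continuous_ip_right (x : Fin n → ℝ) : Continuous fun y => ip B x y := by
  unfold ip; fun_prop

lemma continuous_ip_self : Continuous fun y => ip B y y := by
  unfold ip; fun_prop

variable {B}

lemma ip_comm (hB : B.PosDef) (x y : Fin n → ℝ) : ip B x y = ip B y x := by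
  have h : Bᵀ = B := (show B.IsSymm by simpa using hB.isHermitian)
  unfold ip
  rw [dotProduct_mulVec, dotProduct_comm, ← mulVec_transpose, h]

lemma ip_self_nonneg (hB : B.PosDef) (x : Fin n → ℝ) : 0 ≤ ip B x x := by
  simpa [ip] using hB.posSemidef.dotProduct_mulVec_nonneg x

lemma ip_self_eq_zero (hB : B.PosDef) {x : Fin n → ℝ} (h : ip B x x = 0) : x = 0 := by
  by_contra hx
  have := hB.dotProduct_mulVec_pos hx
  simp only [star_trivial] at this
  exact absurd h (ne_of_gt this)

lemma ip_cauchy (hB : B.PosDef) (x y : Fin n → ℝ) : ip B x y ^ 2 ≤ ip B x x * ip B y y := by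
  have h : ∀ t : ℝ, 0 ≤ ip B y y * (t * t) + 2 * ip B x y * t + ip B x x := fun t => by
    have := ip_self_nonneg hB (x + t • y)
    simp only [ip_add_left, ip_add_right, ip_smul_left, ip_smul_right, ip_comm hB y x] at this
    linarith
  have := discrim_le_zero h
  unfold discrim at this
  linarith

end InnerProduct

/-! ### The unit ball, atoms and the dual unit ball -/

/-- The standing assumptions on `B` and `N`. -/
structure Setting (B : Matrix (Fin n) (Fin n) ℝ) (N : (Fin n → ℝ) → ℝ) : Prop where
  pd : B.PosDef
  norm : IsNorm N
  ext : ∀ a ∈ extPts N, normu B a = 1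

/-- `y` lies in the dual unit ball, `‖y‖* ≤ 1`, written without a supremum. -/
def D1 (B : Matrix (Fin n) (Fin n) ℝ) (N : (Fin n → ℝ) → ℝ) (y : Fin n → ℝ) : Prop :=
  ∀ c, ip B y c ≤ N c

/-- Atoms: points of the unit ball of `N` with `‖a‖ᵤ = 1`.  They contain the extreme points
of the ball, by assumption, and this description makes the set visibly closed. -/
def Atom (B : Matrix (Fin n) (Fin n) ℝ) (N : (Fin n → ℝ) → ℝ) (a : Fin n → ℝ) : Prop :=
  N a ≤ 1 ∧ ip B a a = 1

namespace IsNorm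

variable {N : (Fin n → ℝ) → ℝ}

lemma map_zero (hN : IsNorm N) : N 0 = 0 := (hN.eq_zero_iff 0).2 rfl

lemma map_neg (hN : IsNorm N) (x : Fin n → ℝ) : N (-x) = N x := by
  simpa using hN.smul_eq (-1) x

lemma convexOn (hN : IsNorm N) : ConvexOn ℝ Set.univ N := by
  refine ⟨convex_univ, fun x _ y _ s t hs ht _ => ?_⟩
  refine (hN.triangle _ _).trans ?_
  rw [hN.smul_eq, hN.smul_eq, abs_of_nonneg hs, abs_of_nonneg ht, smul_eq_mul, smul_eq_mul]

lemma continuous (hN : IsNorm N) : Continuous N :=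
  hN.convexOn.locallyLipschitz.continuous

lemma sum_le (hN : IsNorm N) {ι : Type*} (s : Finset ι) (f : ι → Fin n → ℝ) :
    N (∑ i ∈ s, f i) ≤ ∑ i ∈ s, N (f i) :=
  Finset.le_sum_of_subadditive N hN.map_zero.le hN.triangle s f

lemma isCompact_ball (hN : IsNorm N) (r : ℝ) : IsCompact {x | N x ≤ r} := by
  refine Metric.isCompact_of_isClosed_isBounded
    (isClosed_le hN.continuous continuous_const) ?_
  rcases (Metric.sphere (0 : Fin n → ℝ) 1).eq_empty_or_nonempty with he | hne
  · refine (Metric.isBounded_closedBall (x := (0 : Fin n → ℝ)) (r := 0)).subset fun x _ => ?_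
    by_contra hx
    have hx0 : x ≠ 0 := fun h => hx (by simp [h])
    have : (‖x‖⁻¹ • x) ∈ Metric.sphere (0 : Fin n → ℝ) 1 := by
      simp [norm_smul, hx0]
    rw [he] at this
    exact this
  · obtain ⟨u, hu, hmin⟩ := (isCompact_sphere (0 : Fin n → ℝ) 1).exists_isMinOn hne
      hN.continuous.continuousOn
    have hu0 : u ≠ 0 := by
      rintro rfl; simp at hu
    have hpos : 0 < N u := lt_of_le_of_ne (hN.nonneg u) fun h => hu0 ((hN.eq_zero_iff u).1 h.symm)
    refine (Metric.isBounded_closedBall (x := (0 : Fin n → ℝ)) (r := r / N u)).subset fun x hx => ?_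
    rw [mem_closedBall_zero_iff, le_div_iff₀ hpos]
    by_cases hx0 : x = 0
    · subst hx0
      have : N 0 ≤ r := hx
      rw [hN.map_zero] at this
      simpa using this
    have hnx : 0 < ‖x‖ := norm_pos_iff.2 hx0
    have h1 : (‖x‖⁻¹ • x) ∈ Metric.sphere (0 : Fin n → ℝ) 1 := by
      simp [norm_smul, hx0]
    have h2 : N u ≤ N (‖x‖⁻¹ • x) := hmin h1
    rw [hN.smul_eq, abs_of_pos (inv_pos.2 hnx), inv_mul_eq_div, le_div_iff₀ hnx] at h2
    have h3 : N x ≤ r := hx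
    linarith

end IsNorm

namespace Setting

variable {B : Matrix (Fin n) (Fin n) ℝ} {N : (Fin n → ℝ) → ℝ}

/-- Every linear functional attains its maximum over the unit ball of `N` at an atom. -/
lemma exists_atom (h : Setting B N) (x : Fin n → ℝ) :
    ∃ a, Atom B N a ∧ ∀ c, ip B x c ≤ ip B x a * N c := by
  obtain ⟨z, hz, hzmax⟩ := (h.norm.isCompact_ball 1).exists_isMaxOn
    ⟨0, by simp [h.norm.map_zero]⟩ (continuous_ip_right B x).continuousOn
  let l : StrongDual ℝ (Fin n → ℝ) :=
    ⟨{ toFun := fun y => ip B x y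
       map_add' := ip_add_right B x
       map_smul' := fun c y => by simp [ip_smul_right] }, continuous_ip_right B x⟩
  have hexp : IsExposed ℝ {y | N y ≤ 1} {w ∈ {y | N y ≤ 1} | ∀ y ∈ {y | N y ≤ 1}, l y ≤ l w} :=
    fun _ => ⟨l, rfl⟩
  obtain ⟨a, ha⟩ := (hexp.isCompact (h.norm.isCompact_ball 1)).extremePoints_nonempty
    ⟨z, hz, fun y hy => hzmax hy⟩
  have hmax : ∀ y, N y ≤ 1 → ip B x y ≤ ip B x a := fun y hy => (extremePoints_subset ha).2 y hy
  have hext : a ∈ extPts N := hexp.isExtreme.extremePoints_subset_extremePoints ha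
  have hu := h.ext a hext
  refine ⟨a, ⟨(extremePoints_subset ha).1, ?_⟩, fun c => ?_⟩
  · rw [normu, Real.sqrt_eq_one] at hu
    exact hu
  · by_cases hc : c = 0
    · simp [hc, ip_zero_right, h.norm.map_zero]
    have hpos : 0 < N c :=
      lt_of_le_of_ne (h.norm.nonneg c) fun hh => hc ((h.norm.eq_zero_iff c).1 hh.symm)
    have := hmax ((N c)⁻¹ • c) (by
      rw [h.norm.smul_eq, abs_of_pos (inv_pos.2 hpos), inv_mul_cancel₀ hpos.ne'])
    rwa [ip_smul_right, inv_mul_eq_div, div_le_iff₀ hpos] at this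

/-- `‖·‖ᵤ ≤ N`: the unit ball of `N` is the convex hull of atoms. -/
lemma ip_self_le (h : Setting B N) (c : Fin n → ℝ) : ip B c c ≤ N c ^ 2 := by
  obtain ⟨a, ha, hmax⟩ := h.exists_atom c
  have h1 := hmax c
  have h2 := ip_cauchy h.pd c a
  rw [ha.2, mul_one] at h2
  have h0 := ip_self_nonneg h.pd c
  have hN := h.norm.nonneg c
  rcases h0.eq_or_lt with h0 | h0
  · rw [← h0]; positivity
  have h3 : ip B c c ^ 2 ≤ (ip B c a * N c) ^ 2 := pow_le_pow_left₀ h0.le h1 2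
  have h4 : (ip B c a * N c) ^ 2 ≤ ip B c c * N c ^ 2 := by
    rw [mul_pow]; exact mul_le_mul_of_nonneg_right h2 (sq_nonneg _)
  nlinarith

lemma atom_norm (h : Setting B N) {a : Fin n → ℝ} (ha : Atom B N a) : N a = 1 := by
  have h1 := h.ip_self_le a
  rw [ha.2] at h1
  nlinarith [ha.1, h.norm.nonneg a]

lemma atom_D1 (h : Setting B N) {a : Fin n → ℝ} (ha : Atom B N a) : D1 B N a := fun c => by
  have h1 := ip_cauchy h.pd a c
  rw [ha.2, one_mul] at h1
  exact abs_le_of_sq_le_sq' (h1.trans (h.ip_self_le c)) (h.norm.nonneg c) |>.2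

lemma D1_zero (h : Setting B N) : D1 B N 0 := fun c => by
  rw [ip_zero_left]; exact h.norm.nonneg c

lemma D1_neg (h : Setting B N) {y : Fin n → ℝ} (hy : D1 B N y) : D1 B N (-y) := fun c => by
  rw [ip_neg_left, ← ip_neg_right, ← h.norm.map_neg c]; exact hy _

lemma D1_abs (h : Setting B N) {y : Fin n → ℝ} (hy : D1 B N y) (c : Fin n → ℝ) :
    |ip B y c| ≤ N c := by
  refine abs_le.2 ⟨?_, hy c⟩
  have := h.D1_neg hy c
  rw [ip_neg_left] at this
  linarith

lemma dualNorm_le_one_iff (h : Setting B N) (y : Fin n → ℝ) :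
    dualNorm B N y ≤ 1 ↔ D1 B N y := by
  have hne : ((fun x => ip B y x) '' {x | N x ≤ 1}).Nonempty :=
    ⟨_, 0, by simp [h.norm.map_zero], rfl⟩
  have hbdd : BddAbove ((fun x => ip B y x) '' {x | N x ≤ 1}) :=
    (h.norm.isCompact_ball 1).bddAbove_image (continuous_ip_right B y).continuousOn
  constructor
  · intro hy c
    obtain ⟨a, ha, hmax⟩ := h.exists_atom y
    have h1 : ip B y a ≤ 1 := (le_csSup hbdd ⟨a, ha.1, rfl⟩).trans hy
    exact (hmax c).trans (by nlinarith [h.norm.nonneg c])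
  · rintro hy
    refine csSup_le hne ?_
    rintro _ ⟨x, hx, rfl⟩
    exact (hy x).trans hx

lemma mem_subdiff_iff (h : Setting B N) {x z : Fin n → ℝ} :
    z ∈ subdiff B N x ↔ D1 B N z ∧ ip B z x = N x := by
  constructor
  · intro hz
    have h0 := hz 0
    have h2 := hz ((2 : ℝ) • x)
    rw [h.norm.smul_eq, ip_sub_right, ip_smul_right] at h2
    rw [h.norm.map_zero, ip_sub_right, ip_zero_right] at h0
    norm_num at h2
    have he : ip B z x = N x := by linarith
    refine ⟨fun c => ?_, he⟩
    have := hz c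
    rw [ip_sub_right] at this
    linarith
  · rintro ⟨h1, h2⟩ y
    rw [ip_sub_right]
    linarith [h1 y]

/-- `e x` is the projection of `0` onto `∂N(x)`: any subgradient `E` whose inner product with
every subgradient equals `‖E‖ᵤ²` is `e x`. -/
lemma e_eq (h : Setting B N) (D : DecompStruct B N) {x E : Fin n → ℝ}
    (hE : E ∈ subdiff B N x) (hmin : ∀ z ∈ subdiff B N x, ip B z E = ip B E E) : D.e x = E := by
  have he : D.e x ∈ subdiff B N x := by
    rw [D.subdiff_eq]
    exact ⟨0, fun u _ => ip_zero_right B u, (h.dualNorm_le_one_iff 0).2 h.D1_zero, by simp⟩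
  have h1 := hmin _ he
  rw [D.subdiff_eq] at hE
  obtain ⟨v, hv, -, rfl⟩ := hE
  have h2 := hv _ (D.e_mem x)
  simp only [ip_add_left, ip_add_right, ip_comm h.pd v, h2] at h1
  have : v = 0 := ip_self_eq_zero h.pd (by linarith)
  simp [this]

/-- At an atom `a` the decomposition vector is `a` itself. -/
lemma e_atom (h : Setting B N) (D : DecompStruct B N) {a : Fin n → ℝ} (ha : Atom B N a) :
    D.e a = a := by
  have hNa := h.atom_norm ha
  refine h.e_eq D (h.mem_subdiff_iff.2 ⟨h.atom_D1 ha, by rw [ha.2, hNa]⟩) fun z hz => ?_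
  rw [(h.mem_subdiff_iff.1 hz).2, ha.2, hNa]

end Setting

/-- The orthogonal complement of `T a`, as a subspace.  For an atom `a` the face of the dual unit
ball exposed by `a` is the translate by `a` of the dual unit ball of `V D a`. -/
def V {B : Matrix (Fin n) (Fin n) ℝ} {N : (Fin n → ℝ) → ℝ} (D : DecompStruct B N)
    (a : Fin n → ℝ) : Submodule ℝ (Fin n → ℝ) where
  carrier := perp B (D.T a)
  add_mem' := fun {x y} hx hy u hu => by rw [ip_add_right, hx u hu, hy u hu, add_zero]
  zero_mem' := fun u _ => ip_zero_right B u
  smul_mem' := fun c x hx u hu => by rw [ip_smul_right, hx u hu, mul_zero]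

namespace Setting

variable {B : Matrix (Fin n) (Fin n) ℝ} {N : (Fin n → ℝ) → ℝ}

lemma V_add (h : Setting B N) (D : DecompStruct B N) {a v : Fin n → ℝ} (ha : Atom B N a)
    (hv : v ∈ V D a) (hv1 : D1 B N v) : D1 B N (a + v) := by
  have : a + v ∈ subdiff B N a := by
    rw [D.subdiff_eq, h.e_atom D ha]
    exact ⟨v, hv, (h.dualNorm_le_one_iff v).2 hv1, rfl⟩
  exact (h.mem_subdiff_iff.1 this).1

lemma V_sub (h : Setting B N) (D : DecompStruct B N) {a z : Fin n → ℝ} (ha : Atom B N a)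
    (hz : D1 B N z) (hza : ip B z a = 1) : z - a ∈ V D a ∧ D1 B N (z - a) := by
  have : z ∈ subdiff B N a := h.mem_subdiff_iff.2 ⟨hz, by rw [hza, h.atom_norm ha]⟩
  rw [D.subdiff_eq, h.e_atom D ha] at this
  obtain ⟨v, hv, hv1, rfl⟩ := this
  rw [add_sub_cancel_left]
  exact ⟨hv, (h.dualNorm_le_one_iff v).1 hv1⟩

lemma V_orth (h : Setting B N) (D : DecompStruct B N) {a v : Fin n → ℝ} (ha : Atom B N a)
    (hv : v ∈ V D a) : ip B v a = 0 := by
  rw [ip_comm h.pd]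
  have := D.e_mem a
  rw [h.e_atom D ha] at this
  exact hv a this

lemma V_smul_add (h : Setting B N) (D : DecompStruct B N) {a v : Fin n → ℝ} (ha : Atom B N a)
    (hv : v ∈ V D a) (hv1 : D1 B N v) {s : ℝ} (hs : |s| ≤ 1) : D1 B N (s • a + v) := fun c => by
  have h1 := h.V_add D ha hv hv1 c
  have h2 := h.D1_neg (h.V_add D ha ((V D a).neg_mem hv) (h.D1_neg hv1)) c
  simp only [ip_add_left, ip_neg_left, ip_smul_left] at h1 h2 ⊢
  have h3 : s * ip B a c ≤ |ip B a c| := by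
    refine (le_abs_self _).trans ?_
    rw [abs_mul]
    exact mul_le_of_le_one_left (abs_nonneg _) hs
  rcases abs_cases (ip B a c) with ⟨h4, _⟩ | ⟨h4, _⟩ <;> linarith

end Setting

/-! ### Frames -/

/-- Prepend a term to a sequence. -/
def consSeq {α : Type*} (x : α) (f : ℕ → α) : ℕ → α
  | 0 => x
  | i + 1 => f i

@[simp] lemma consSeq_zero {α : Type*} (x : α) (f : ℕ → α) : consSeq x f 0 = x := rfl

@[simp] lemma consSeq_succ {α : Type*} (x : α) (f : ℕ → α) (i : ℕ) :
    consSeq x f (i + 1) = f i := rfl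

/-- A frame of `x` is an analogue of a singular value decomposition: `x = ∑ γ i • a i` with
positive decreasing `γ` and orthonormal atoms `a i ∈ U`, such that all combinations of the `a i`
with coefficients in `[-1, 1]` lie in the dual unit ball.  Sequences are extended by zero past the
number `R` of terms. -/
structure Frame (B : Matrix (Fin n) (Fin n) ℝ) (N : (Fin n → ℝ) → ℝ)
    (U : Submodule ℝ (Fin n → ℝ)) (x : Fin n → ℝ) (a : ℕ → Fin n → ℝ) (γ : ℕ → ℝ) (R : ℕ) :
    Prop where
  atom : ∀ i < R, Atom B N (a i)
  mem : ∀ i < R, a i ∈ U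
  a_zero : ∀ i, R ≤ i → a i = 0
  γ_zero : ∀ i, R ≤ i → γ i = 0
  γ_pos : ∀ i < R, 0 < γ i
  anti : Antitone γ
  orth : ∀ i j, i ≠ j → ip B (a i) (a j) = 0
  dual : ∀ (M : ℕ) (s : ℕ → ℝ), (∀ i, |s i| ≤ 1) → D1 B N (∑ i ∈ Finset.range M, s i • a i)
  sum_eq : ∑ i ∈ Finset.range R, γ i • a i = x

/-- A subspace is good if it contains every atom at which the functional of one of its elements
attains a positive maximum. -/
def Good (B : Matrix (Fin n) (Fin n) ℝ) (N : (Fin n → ℝ) → ℝ)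
    (U : Submodule ℝ (Fin n → ℝ)) : Prop :=
  ∀ x ∈ U, ∀ b, Atom B N b → (∀ c, ip B x c ≤ ip B x b * N c) → 0 < ip B x b → b ∈ U

namespace Setting

variable {B : Matrix (Fin n) (Fin n) ℝ} {N : (Fin n → ℝ) → ℝ}

/-- Strong orthogonality of atoms is symmetric. -/
lemma V_comm (h : Setting B N) (D : DecompStruct B N) {a b : Fin n → ℝ} (ha : Atom B N a)
    (hb : Atom B N b) (hab : a ∈ V D b) : b ∈ V D a := by
  have h1 := h.V_add D hb hab (h.atom_D1 ha)
  have h2 := (h.V_sub D ha h1 (by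
    rw [ip_add_left, ip_comm h.pd, h.V_orth D hb hab, ha.2, zero_add])).1
  simpa using h2

/-- Goodness passes to the summand `V D a`: an atom `b` maximizing `⟪x, ·⟫` for `x ∈ V D a` is
orthogonal to `a` because both `a + v` and `-a + v` lie in the dual unit ball, where `v` is `x`
normalized. -/
lemma good_inf (h : Setting B N) (D : DecompStruct B N) {U : Submodule ℝ (Fin n → ℝ)}
    (hU : Good B N U) {a : Fin n → ℝ} (ha : Atom B N a) : Good B N (U ⊓ V D a) := by
  rintro x ⟨hxU, hxV⟩ b hb hmax hpos
  refine ⟨hU x hxU b hb hmax hpos, ?_⟩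
  set v := (ip B x b)⁻¹ • x with hv
  have hvV : v ∈ V D a := (V D a).smul_mem _ hxV
  have hv1 : D1 B N v := fun c => by
    rw [hv, ip_smul_left, inv_mul_le_iff₀ hpos]; exact hmax c
  have hvb : ip B v b = 1 := by rw [hv, ip_smul_left, inv_mul_cancel₀ hpos.ne']
  have hp := h.V_add D ha hvV hv1
  have hm := h.V_smul_add D ha hvV hv1 (s := -1) (by simp) b
  have hp' := hp b
  rw [ip_add_left, hvb, h.atom_norm hb] at hp'
  rw [ip_add_left, ip_smul_left, hvb, h.atom_norm hb] at hm
  have hab : ip B a b = 0 := by linarith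
  have h1 := (h.V_sub D hb hp (by rw [ip_add_left, hab, hvb, zero_add])).1
  have h2 := (h.V_sub D hb hv1 hvb).1
  have h3 : a ∈ V D b := by
    have := (V D b).sub_mem h1 h2
    simpa using this
  exact h.V_comm D ha hb h3

/-- Existence of frames inside a good subspace, by induction on its dimension `d`: split off an atom
`a₀` maximizing `⟪x, ·⟫` and continue in `U ⊓ V D a₀`.  The bound on `γ 0` by the dual norm of `x`
makes the coefficients decreasing. -/
lemma exists_frame_aux (h : Setting B N) (D : DecompStruct B N) (d : ℕ) :
    ∀ U : Submodule ℝ (Fin n → ℝ), Good B N U → Module.finrank ℝ U ≤ d → ∀ x ∈ U,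
      ∃ a γ R, Frame B N U x a γ R ∧ ∀ g : ℝ, 0 ≤ g → (∀ c, ip B x c ≤ g * N c) → γ 0 ≤ g := by
  have zero_case : ∀ U : Submodule ℝ (Fin n → ℝ),
      ∃ a γ R, Frame B N U 0 a γ R ∧ ∀ g : ℝ, 0 ≤ g → (∀ c, ip B 0 c ≤ g * N c) → γ 0 ≤ g :=
    fun U => ⟨fun _ => 0, fun _ => 0, 0, ⟨by simp, by simp, by simp, by simp, by simp,
      fun _ _ _ => le_rfl, fun _ _ _ => ip_zero_left B _, fun M s _ => by
        simpa using h.D1_zero, by simp⟩, fun g hg _ => hg⟩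
  induction d with
  | zero =>
    intro U _ hd x hx
    have : U = ⊥ := Submodule.finrank_eq_zero.1 (Nat.le_zero.1 hd)
    rw [this, Submodule.mem_bot] at hx
    subst hx
    exact zero_case U
  | succ d ih =>
    intro U hU hd x hx
    by_cases hx0 : x = 0
    · subst hx0; exact zero_case U
    obtain ⟨a₀, ha₀, hmax⟩ := h.exists_atom x
    have hpos : 0 < ip B x a₀ := by
      by_contra hneg
      have h1 := hmax x
      have h2 : ip B x x = 0 := le_antisymm
        (h1.trans (mul_nonpos_of_nonpos_of_nonneg (not_lt.1 hneg) (h.norm.nonneg x)))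
        (ip_self_nonneg h.pd x)
      exact hx0 (ip_self_eq_zero h.pd h2)
    set g₀ := ip B x a₀ with hg₀
    have ha₀U : a₀ ∈ U := hU x hx a₀ ha₀ hmax hpos
    have hz1 : D1 B N (g₀⁻¹ • x) := fun c => by
      rw [ip_smul_left, inv_mul_le_iff₀ hpos]; exact hmax c
    obtain ⟨hzV, hzD⟩ := h.V_sub D ha₀ hz1 (by rw [ip_smul_left, inv_mul_cancel₀ hpos.ne'])
    have hrest : x - g₀ • a₀ = g₀ • (g₀⁻¹ • x - a₀) := by
      rw [smul_sub, smul_smul, mul_inv_cancel₀ hpos.ne', one_smul]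
    have hrU : x - g₀ • a₀ ∈ U ⊓ V D a₀ :=
      ⟨U.sub_mem hx (U.smul_mem _ ha₀U), by rw [hrest]; exact (V D a₀).smul_mem _ hzV⟩
    have hlt : U ⊓ V D a₀ < U := by
      refine lt_of_le_of_ne inf_le_left fun he => ?_
      have : a₀ ∈ U ⊓ V D a₀ := by rw [he]; exact ha₀U
      have := h.V_orth D ha₀ this.2
      rw [ha₀.2] at this
      exact one_ne_zero this
    have hfin := Submodule.finrank_lt_finrank_of_lt hlt
    obtain ⟨a, γ, R, hF, hg⟩ := ih _ (h.good_inf D hU ha₀) (by omega) _ hrU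
    have hγ0 : γ 0 ≤ g₀ := hg g₀ hpos.le fun c => by
      rw [hrest, ip_smul_left]; exact mul_le_mul_of_nonneg_left (hzD c) hpos.le
    have haV : ∀ i, a i ∈ V D a₀ := fun i => by
      by_cases hi : i < R
      · exact (hF.mem i hi).2
      · rw [hF.a_zero i (not_lt.1 hi)]; exact (V D a₀).zero_mem
    refine ⟨consSeq a₀ a, consSeq g₀ γ, R + 1, ⟨?_, ?_, ?_, ?_, ?_, ?_, ?_, ?_, ?_⟩, ?_⟩
    · rintro (_ | i) hi
      · exact ha₀
      · exact hF.atom i (by omega)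
    · rintro (_ | i) hi
      · exact ha₀U
      · exact (hF.mem i (by omega)).1
    · rintro (_ | i) hi
      · omega
      · exact hF.a_zero i (by omega)
    · rintro (_ | i) hi
      · omega
      · exact hF.γ_zero i (by omega)
    · rintro (_ | i) hi
      · exact hpos
      · exact hF.γ_pos i (by omega)
    · refine antitone_nat_of_succ_le ?_
      rintro (_ | i)
      · exact hγ0
      · exact hF.anti (Nat.le_succ i)
    · rintro (_ | i) (_ | j) hij
      · exact absurd rfl hij
      · rw [consSeq_zero, consSeq_succ, ip_comm h.pd]
        exact h.V_orth D ha₀ (haV j)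
      · exact h.V_orth D ha₀ (haV i)
      · exact hF.orth i j (by omega)
    · rintro (_ | M) s hs
      · simpa using h.D1_zero
      · rw [Finset.sum_range_succ', add_comm]
        exact h.V_smul_add D ha₀ ((V D a₀).sum_mem fun i _ => (V D a₀).smul_mem _ (haV i))
          (hF.dual M (fun i => s (i + 1)) fun i => hs _) (hs 0)
    · rw [Finset.sum_range_succ']
      simp only [consSeq_succ, consSeq_zero]
      rw [hF.sum_eq, sub_add_cancel]
    · intro g _ hgx
      have := hgx a₀
      rwa [h.atom_norm ha₀, mul_one] at this

lemma exists_frame (h : Setting B N) (D : DecompStruct B N) {U : Submodule ℝ (Fin n → ℝ)}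
    (hU : Good B N U) {x : Fin n → ℝ} (hx : x ∈ U) : ∃ a γ R, Frame B N U x a γ R := by
  obtain ⟨a, γ, R, hF, -⟩ := h.exists_frame_aux D _ U hU le_rfl x hx
  exact ⟨a, γ, R, hF⟩

lemma good_top : Good B N ⊤ := fun _ _ _ _ _ _ => Submodule.mem_top

lemma good_V (h : Setting B N) (D : DecompStruct B N) {a : Fin n → ℝ} (ha : Atom B N a) :
    Good B N (V D a) := by
  have := h.good_inf D good_top ha
  rwa [top_inf_eq] at this

end Setting

/-- Partial sums of the atoms of a frame. -/
def psum (a : ℕ → Fin n → ℝ) (j : ℕ) : Fin n → ℝ := ∑ i ∈ Finset.range j, a i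

/-- Tripotents: points `p` of the dual unit ball with `N p = ‖p‖ᵤ²`.  They are exactly the sums of
atoms of frames. -/
structure Trip (B : Matrix (Fin n) (Fin n) ℝ) (N : (Fin n → ℝ) → ℝ) (p : Fin n → ℝ) : Prop where
  D1 : D1 B N p
  le : N p ≤ ip B p p

namespace Frame

variable {B : Matrix (Fin n) (Fin n) ℝ} {N : (Fin n → ℝ) → ℝ} {U : Submodule ℝ (Fin n → ℝ)}
  {x : Fin n → ℝ} {a : ℕ → Fin n → ℝ} {γ : ℕ → ℝ} {R : ℕ}

lemma γ_nonneg (hF : Frame B N U x a γ R) (j : ℕ) : 0 ≤ γ j := by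
  rw [← hF.γ_zero (max j R) (le_max_right _ _)]
  exact hF.anti (le_max_left _ _)

lemma N_atom (h : Setting B N) (hF : Frame B N U x a γ R) (i : ℕ) :
    N (a i) = ip B (a i) (a i) := by
  by_cases hi : i < R
  · rw [h.atom_norm (hF.atom i hi), (hF.atom i hi).2]
  · rw [hF.a_zero i (not_lt.1 hi), ip_zero_left, h.norm.map_zero]

lemma N_le (h : Setting B N) (hF : Frame B N U x a γ R) (i : ℕ) : N (a i) ≤ 1 := by
  by_cases hi : i < R
  · exact (hF.atom i hi).1
  · rw [hF.a_zero i (not_lt.1 hi), h.norm.map_zero]; exact zero_le_one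

lemma sum_eq' (hF : Frame B N U x a γ R) (j : ℕ) :
    ∑ i ∈ Finset.range (R + j), γ i • a i = x := by
  rw [← hF.sum_eq]
  refine (Finset.sum_subset (Finset.range_mono (Nat.le_add_right R j)) fun i _ hi => ?_).symm
  rw [hF.γ_zero i (by simpa using hi), zero_smul]

lemma ip_atom (hF : Frame B N U x a γ R) (j : ℕ) : ip B x (a j) = γ j := by
  rw [← hF.sum_eq' (j + 1), ip_sum_left, Finset.sum_eq_single j]
  · rw [ip_smul_left]
    by_cases hj : j < R
    · rw [(hF.atom j hj).2, mul_one]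
    · rw [hF.γ_zero j (not_lt.1 hj), zero_mul]
  · intro i _ hi
    rw [ip_smul_left, hF.orth i j hi, mul_zero]
  · intro hj
    exact absurd (Finset.mem_range.2 (by omega)) hj

lemma psum_D1 (hF : Frame B N U x a γ R) (j : ℕ) : D1 B N (psum a j) := by
  have := hF.dual j (fun _ => 1) (by simp)
  simpa [psum] using this

lemma ip_psum_atom (hF : Frame B N U x a γ R) {i j : ℕ} (hij : i < j) :
    ip B (psum a j) (a i) = ip B (a i) (a i) := by
  rw [psum, ip_sum_left, Finset.sum_eq_single i]
  · exact fun k _ hk => hF.orth k i hk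
  · exact fun hi => absurd (Finset.mem_range.2 hij) hi

lemma ip_psum_atom_zero (hF : Frame B N U x a γ R) {i j : ℕ} (hij : j ≤ i) :
    ip B (psum a j) (a i) = 0 := by
  rw [psum, ip_sum_left]
  refine Finset.sum_eq_zero fun k hk => hF.orth k i ?_
  have := Finset.mem_range.1 hk
  omega

lemma ip_psum_self (h : Setting B N) (hF : Frame B N U x a γ R) (j : ℕ) :
    ip B (psum a j) (psum a j) = ∑ i ∈ Finset.range j, ip B (a i) (a i) := by
  conv_lhs => enter [2]; rw [psum]
  rw [ip_sum_left]
  refine Finset.sum_congr rfl fun i hi => ?_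
  rw [ip_comm h.pd, hF.ip_psum_atom (Finset.mem_range.1 hi)]

lemma psum_trip (h : Setting B N) (hF : Frame B N U x a γ R) (j : ℕ) : Trip B N (psum a j) := by
  refine ⟨hF.psum_D1 j, ?_⟩
  rw [hF.ip_psum_self h]
  exact (h.norm.sum_le _ _).trans (Finset.sum_le_sum fun i _ => (hF.N_atom h i).le)

lemma ip_psum_le (h : Setting B N) (hF : Frame B N U x a γ R) (j : ℕ) :
    ip B (psum a j) (psum a j) ≤ j := by
  rw [hF.ip_psum_self h]
  refine (Finset.sum_le_card_nsmul _ _ 1 fun i _ => ?_).trans (by simp)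
  rw [← hF.N_atom h]; exact hF.N_le h i

lemma ip_psum_R (h : Setting B N) (hF : Frame B N U x a γ R) :
    ip B (psum a R) (psum a R) = R := by
  rw [hF.ip_psum_self h, Finset.sum_congr rfl fun i hi => (hF.atom i (Finset.mem_range.1 hi)).2]
  simp

lemma psum_mem (hF : Frame B N U x a γ R) : psum a R ∈ U :=
  U.sum_mem fun i hi => hF.mem i (Finset.mem_range.1 hi)

lemma ip_psum (h : Setting B N) (hF : Frame B N U x a γ R) (j : ℕ) :
    ip B x (psum a j) = ∑ i ∈ Finset.range j, γ i := by
  rw [ip_comm h.pd, psum, ip_sum_left]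
  exact Finset.sum_congr rfl fun i _ => by rw [ip_comm h.pd, hF.ip_atom]

lemma N_eq (h : Setting B N) (hF : Frame B N U x a γ R) : N x = ∑ i ∈ Finset.range R, γ i := by
  apply le_antisymm
  · conv_lhs => rw [← hF.sum_eq]
    refine (h.norm.sum_le _ _).trans (Finset.sum_le_sum fun i _ => ?_)
    rw [h.norm.smul_eq, abs_of_nonneg (hF.γ_nonneg i)]
    exact mul_le_of_le_one_right (hF.γ_nonneg i) (hF.N_le h i)
  · rw [← hF.ip_psum h, ip_comm h.pd]
    exact hF.psum_D1 R x

/-- Ky Fan type maximum principle: `psum a j` maximizes `⟪x, ·⟫` over the intersection of the dual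
unit ball with the ball of radius `j` of `N`. -/
lemma ip_le (h : Setting B N) (hF : Frame B N U x a γ R) {u : Fin n → ℝ} {j : ℕ}
    (hu : D1 B N u) (hj : N u ≤ j) : ip B x u ≤ ip B x (psum a j) := by
  rw [hF.ip_psum h]
  set t : ℕ → ℝ := fun i => ip B (a i) u with ht
  have ht1 : ∀ i, |t i| ≤ 1 := fun i => by
    change |ip B (a i) u| ≤ 1
    rw [ip_comm h.pd]
    exact (h.D1_abs hu _).trans (hF.N_le h i)
  have hsum : ∑ i ∈ Finset.range (R + j), |t i| ≤ j := by
    have h1 := hF.dual (R + j) (fun i => if 0 ≤ t i then 1 else -1) (fun i => by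
      split_ifs <;> simp) u
    rw [ip_sum_left] at h1
    refine le_trans (le_of_eq (Finset.sum_congr rfl fun i _ => ?_)) (h1.trans hj)
    rw [ip_smul_left]
    change |t i| = _ * t i
    split_ifs with h0
    · rw [abs_of_nonneg h0, one_mul]
    · rw [abs_of_neg (not_le.1 h0)]; ring
  have hterm : ∀ i, γ i * t i ≤ (if i < j then γ i - γ j else 0) + γ j * |t i| := fun i => by
    have h1 : γ i * t i ≤ γ i * |t i| := mul_le_mul_of_nonneg_left (le_abs_self _) (hF.γ_nonneg i)
    have h0 := abs_nonneg (t i)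
    split_ifs with hij
    · have := hF.anti hij.le
      nlinarith [ht1 i]
    · have := hF.anti (not_lt.1 hij)
      nlinarith
  have hx : ip B x u = ∑ i ∈ Finset.range (R + j), γ i * t i := by
    conv_lhs => rw [← hF.sum_eq' j]
    rw [ip_sum_left]
    exact Finset.sum_congr rfl fun i _ => ip_smul_left _ _ _ _
  have hite : ∑ i ∈ Finset.range (R + j), (if i < j then γ i - γ j else 0)
      = ∑ i ∈ Finset.range j, (γ i - γ j) := by
    rw [← Finset.sum_filter]
    refine Finset.sum_congr ?_ fun _ _ => rfl
    ext i
    simp only [Finset.mem_filter, Finset.mem_range]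
    omega
  calc ip B x u ≤ ∑ i ∈ Finset.range (R + j),
        ((if i < j then γ i - γ j else 0) + γ j * |t i|) := by
        rw [hx]; exact Finset.sum_le_sum fun i _ => hterm i
    _ = ∑ i ∈ Finset.range j, (γ i - γ j) + γ j * ∑ i ∈ Finset.range (R + j), |t i| := by
        rw [Finset.sum_add_distrib, hite, Finset.mul_sum]
    _ ≤ ∑ i ∈ Finset.range j, (γ i - γ j) + γ j * j := by
        gcongr
        exact hF.γ_nonneg j
    _ = ∑ i ∈ Finset.range j, γ i := by
        rw [Finset.sum_sub_distrib]; simp; ring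

/-- The sum of the atoms of a frame of `x` is `e x`, so that `K x` is the length of the frame. -/
lemma Kfun_eq (h : Setting B N) (D : DecompStruct B N) (hF : Frame B N U x a γ R) :
    Kfun B N D x = R := by
  have hE : D.e x = psum a R := by
    refine h.e_eq D (h.mem_subdiff_iff.2 ⟨hF.psum_D1 R, ?_⟩) fun z hz => ?_
    · rw [ip_comm h.pd, hF.ip_psum h, hF.N_eq h]
    obtain ⟨hz1, hzx⟩ := h.mem_subdiff_iff.1 hz
    have hle : ∀ i ∈ Finset.range R, γ i * ip B z (a i) ≤ γ i := fun i _ =>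
      mul_le_of_le_one_right (hF.γ_nonneg i) ((hz1 _).trans (hF.N_le h i))
    have heq : ∑ i ∈ Finset.range R, γ i * ip B z (a i) = ∑ i ∈ Finset.range R, γ i := by
      rw [← hF.N_eq h, ← hzx, ip_comm h.pd z x]
      conv_rhs => rw [← hF.sum_eq]
      rw [ip_sum_left]
      exact Finset.sum_congr rfl fun i _ => by rw [ip_smul_left, ip_comm h.pd]
    have h1 := (Finset.sum_eq_sum_iff_of_le hle).1 heq
    rw [hF.ip_psum_R h, ip_comm h.pd, psum, ip_sum_left,
      Finset.sum_congr rfl (g := fun _ => (1 : ℝ)) fun i hi => ?_]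
    · simp
    · rw [ip_comm h.pd]
      exact (mul_right_eq_self₀.1 (h1 i hi)).resolve_right
        (hF.γ_pos i (Finset.mem_range.1 hi)).ne'
  rw [Kfun, hE, normu, Real.sq_sqrt (ip_self_nonneg h.pd _), hF.ip_psum_R h]

end Frame

/-! ### Tripotents -/

namespace Trip

variable {B : Matrix (Fin n) (Fin n) ℝ} {N : (Fin n → ℝ) → ℝ}

lemma N_eq {p : Fin n → ℝ} (hp : Trip B N p) : N p = ip B p p := le_antisymm hp.le (hp.D1 p)

lemma isClosed (h : Setting B N) : IsClosed {p | Trip B N p} := by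
  have : {p | Trip B N p} = (⋂ c, {p | ip B c p ≤ N c}) ∩ {p | N p ≤ ip B p p} := by
    ext p
    simp only [Set.mem_ofPred_eq, Set.mem_inter_iff, Set.mem_iInter]
    exact ⟨fun hp => ⟨fun c => by rw [ip_comm h.pd]; exact hp.D1 c, hp.le⟩,
      fun hp => ⟨fun c => by rw [ip_comm h.pd]; exact hp.1 c, hp.2⟩⟩
  rw [this]
  exact (isClosed_iInter fun c => isClosed_le (continuous_ip_right B c) continuous_const).inter
    (isClosed_le h.norm.continuous (continuous_ip_self B))

/-- Removing from a tripotent an atom which it supports leaves a tripotent. -/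
lemma sub_atom (h : Setting B N) (D : DecompStruct B N) {p c : Fin n → ℝ} (hp : Trip B N p)
    (hc : Atom B N c) (hpc : ip B p c = 1) : Trip B N (p - c) := by
  obtain ⟨hvV, hv1⟩ := h.V_sub D hc hp.D1 hpc
  obtain ⟨a, γ, R, hF⟩ := h.exists_frame D (h.good_V D hc) hvV
  have h1 := h.V_add D hc hF.psum_mem (hF.psum_D1 R) p
  have h2 : ip B (psum a R) (p - c) = N (p - c) := by
    rw [ip_comm h.pd, hF.ip_psum h, hF.N_eq h]
  have h3 := h.V_orth D hc hF.psum_mem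
  have h4 := hp.le
  refine ⟨hv1, ?_⟩
  rw [ip_sub_right, h3] at h2
  rw [ip_add_left, ip_comm h.pd c p, hpc] at h1
  rw [ip_sub_left, ip_sub_right, ip_sub_right, ip_comm h.pd c p, hpc, hc.2]
  linarith

/-- A tripotent is the sum of the atoms of any of its frames. -/
lemma exists_frame (h : Setting B N) (D : DecompStruct B N) {p : Fin n → ℝ} (hp : Trip B N p) :
    ∃ a R, Frame B N ⊤ p a (fun i => if i < R then 1 else 0) R ∧ psum a R = p := by
  obtain ⟨a, γ, R, hF⟩ := h.exists_frame D Setting.good_top (x := p) Submodule.mem_top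
  have h1 : ∀ i, γ i ≤ 1 := fun i => by
    rw [← hF.ip_atom i]; exact (hp.D1 _).trans (hF.N_le h i)
  have h2 : ip B p p = ∑ i ∈ Finset.range R, γ i * γ i := by
    conv_lhs => enter [2]; rw [← hF.sum_eq]
    rw [ip_sum_left]
    exact Finset.sum_congr rfl fun i _ => by rw [ip_smul_left, ip_comm h.pd, hF.ip_atom]
  have h3 : ∀ i ∈ Finset.range R, γ i * γ i ≤ γ i := fun i _ =>
    mul_le_of_le_one_right (hF.γ_nonneg i) (h1 i)
  have h4 := (Finset.sum_eq_sum_iff_of_le h3).1 (by rw [← h2, ← hF.N_eq h, hp.N_eq])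
  have h5 : γ = fun i => if i < R then 1 else 0 := by
    ext i
    split_ifs with hi
    · exact (mul_right_eq_self₀.1 (h4 i (Finset.mem_range.2 hi))).resolve_right (hF.γ_pos i hi).ne'
    · exact hF.γ_zero i (not_lt.1 hi)
  subst h5
  refine ⟨a, R, hF, ?_⟩
  conv_rhs => rw [← hF.sum_eq]
  exact Finset.sum_congr rfl fun i hi => by rw [if_pos (Finset.mem_range.1 hi), one_smul]

/-- The difference of tripotents `p` and `d` is a tripotent when `d` is dominated by `p`: every atom
of a frame of `d` is supported by `p`, and the atoms are removed one at a time. -/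
lemma sub (h : Setting B N) (D : DecompStruct B N) {p d : Fin n → ℝ} (hp : Trip B N p)
    (hd : Trip B N d) (hpd : ip B p d = ip B d d) : Trip B N (p - d) := by
  obtain ⟨a, R, hF, rfl⟩ := hd.exists_frame h D
  have h1 : ∀ i ∈ Finset.range R, ip B p (a i) ≤ 1 := fun i _ => (hp.D1 _).trans (hF.N_le h i)
  have h2 : ∑ i ∈ Finset.range R, ip B p (a i) = ∑ i ∈ Finset.range R, (1 : ℝ) := by
    rw [hF.ip_psum_R h, ip_comm h.pd] at hpd
    nth_rw 1 [psum] at hpd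
    rw [ip_sum_left] at hpd
    simp only [Finset.sum_const, Finset.card_range, nsmul_eq_mul, mul_one, ← hpd]
    exact Finset.sum_congr rfl fun i _ => ip_comm h.pd _ _
  have h3 := (Finset.sum_eq_sum_iff_of_le h1).1 h2
  have key : ∀ j ≤ R, Trip B N (p - psum a j) := by
    intro j
    induction j with
    | zero => intro _; simpa [psum] using hp
    | succ j ih =>
      intro hj
      have h4 := (ih (by omega)).sub_atom h D (hF.atom j (by omega)) (by
        rw [ip_sub_left, hF.ip_psum_atom_zero le_rfl, h3 j (Finset.mem_range.2 (by omega)),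
          sub_zero])
      rwa [psum, Finset.sum_range_succ, ← sub_sub]
  exact key R le_rfl

end Trip

/-! ### Tripotents on which `x` is positive -/

/-- If the functional `⟪x, ·⟫` is positive on every atom supported by the tripotent `p`, then `x`
has rank at least that of `p`: along the line `x + t • p` the gap `φ` between the maxima of
`⟪x + t • p, ·⟫` over tripotents of rank at most `m + 1` and at most `m` is bounded by `t`. -/
lemma Trip.le_Kfun {B : Matrix (Fin n) (Fin n) ℝ} {N : (Fin n → ℝ) → ℝ} (h : Setting B N)
    (D : DecompStruct B N) {x p : Fin n → ℝ} (hp : Trip B N p)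
    (hx : ∀ c, Atom B N c → ip B p c = 1 → 0 < ip B x c) : ip B p p ≤ Kfun B N D x := by
  obtain ⟨ap, k, hP, hPp⟩ := hp.exists_frame h D
  have hpk : ip B p p = k := by rw [← hPp, hP.ip_psum_R h]
  choose A G r hA using fun t : ℝ =>
    h.exists_frame D Setting.good_top (x := x + t • p) Submodule.mem_top
  have hK : Kfun B N D x = r 0 := by
    have := (hA 0).Kfun_eq h D
    rwa [zero_smul, add_zero] at this
  rw [hpk, hK]
  by_contra! hlt
  obtain ⟨m, rfl⟩ : ∃ m, k = m + 1 := ⟨k - 1, by have := Nat.cast_lt.1 hlt; omega⟩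
  have hrm : r 0 ≤ m := by have := Nat.cast_lt.1 hlt; omega
  have hNp : N p ≤ (m + 1 : ℕ) := by rw [hp.N_eq, hpk]
  set L : ℝ → Fin n → ℝ := fun t => psum (A t) m with hL
  set W : ℝ → Fin n → ℝ := fun t => psum (A t) (m + 1) with hW
  set φ : ℝ → ℝ := fun t => ip B (x + t • p) (A t m) with hφ
  set P : ℝ → ℝ := fun t => ip B p (W t) with hPdef
  have hWL : ∀ t, W t = L t + A t m := fun t => Finset.sum_range_succ _ _
  have hLD : ∀ t, PGH.D1 B N (L t) := fun t => (hA t).psum_D1 m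
  have hWD : ∀ t, PGH.D1 B N (W t) := fun t => (hA t).psum_D1 (m + 1)
  have hLN : ∀ t, N (L t) ≤ m := fun t => ((hA t).psum_trip h m).le.trans ((hA t).ip_psum_le h m)
  have hWN : ∀ t, N (W t) ≤ (m + 1 : ℕ) := fun t =>
    ((hA t).psum_trip h (m + 1)).le.trans ((hA t).ip_psum_le h (m + 1))
  have hφ0 : φ 0 = 0 := by
    rw [hφ]; change ip B (x + (0 : ℝ) • p) (A 0 m) = 0
    rw [(hA 0).ip_atom, (hA 0).γ_zero m hrm]
  have hφWL : ∀ t, φ t = ip B (x + t • p) (W t) - ip B (x + t • p) (L t) := fun t => by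
    rw [hWL, ip_add_right]; ring
  have hstep : ∀ t s : ℝ, 0 ≤ s → φ (t + s) - φ t ≤ s * (P (t + s) - P t) + s := fun t s hs => by
    have h1 := (hA (t + s)).ip_le h (hLD t) (hLN t)
    have h2 := (hA t).ip_le h (hWD (t + s)) (hWN (t + s))
    have h3 : ip B p (A t m) ≤ 1 := (hp.D1 _).trans ((hA t).N_le h m)
    have h4 : P t = ip B p (L t) + ip B p (A t m) := by
      rw [hPdef]; change ip B p (W t) = _; rw [hWL, ip_add_right]
    have h5 : P (t + s) = ip B p (W (t + s)) := rfl
    rw [hφWL, hφWL]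
    change ip B (x + (t + s) • p) (L t) ≤ ip B (x + (t + s) • p) (L (t + s)) at h1
    change ip B (x + t • p) (W (t + s)) ≤ ip B (x + t • p) (W t) at h2
    simp only [ip_add_left, ip_smul_left] at h1 h2 ⊢
    rw [h4, h5]
    have h6 := mul_le_mul_of_nonneg_left h3 hs
    linarith
  have hPbd : ∀ t, |P t| ≤ m + 1 := fun t => by
    have := (h.D1_abs hp.D1 (W t)).trans (hWN t)
    push_cast at this; exact this
  have htel : ∀ (s : ℝ), 0 ≤ s → ∀ j : ℕ, φ (j * s) ≤ s * (P (j * s) - P 0) + j * s := by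
    intro s hs j
    induction j with
    | zero => simp [hφ0]
    | succ j ih =>
      have := hstep (j * s) s hs
      have e : ((j + 1 : ℕ) : ℝ) * s = j * s + s := by push_cast; ring
      rw [e]
      linarith
  have hφT : ∀ T : ℝ, 0 ≤ T → φ T ≤ T := fun T hT => by
    refine le_of_forall_pos_le_add fun ε hε => ?_
    obtain ⟨J, hJ⟩ := exists_nat_gt (T * (2 * (m + 1)) / ε)
    have hJ0 : (0 : ℝ) < J := lt_of_le_of_lt (by positivity) hJ
    have h1 := htel (T / J) (by positivity) J
    rw [mul_div_cancel₀ T hJ0.ne'] at h1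
    have h2 := abs_le.1 (hPbd T)
    have h3 := abs_le.1 (hPbd 0)
    have h4 : T / J * (P T - P 0) ≤ T / J * (2 * (m + 1)) :=
      mul_le_mul_of_nonneg_left (by linarith) (by positivity)
    have h5 : T / J * (2 * (m + 1)) ≤ ε := by
      rw [div_mul_eq_mul_div, div_le_iff₀ hJ0]
      rw [div_lt_iff₀ hε] at hJ
      linarith
    linarith
  have hpL : ∀ t, ip B p (L t) ≤ m := fun t => (hp.D1 _).trans (hLN t)
  have hxp : ∀ t : ℝ, 0 ≤ t → ip B x p ≤ ip B x (L t) := fun t ht => by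
    have h1 := (hA t).ip_le h hp.D1 hNp
    change ip B (x + t • p) p ≤ ip B (x + t • p) (W t) at h1
    have h2 := hφT t ht
    rw [hφWL] at h2
    simp only [ip_add_left, ip_smul_left, hpk] at h1 h2
    push_cast at h1
    have h3 := mul_le_mul_of_nonneg_left (hpL t) ht
    linarith
  -- Comparing with `p` minus one of its atoms shows `⟪p, L t⟫ → m`.
  have hc0 : Atom B N (ap 0) := hP.atom 0 (by omega)
  have hpc0 : ip B p (ap 0) = 1 := by rw [hP.ip_atom]; simp
  have hq := hp.sub_atom h D hc0 hpc0
  have hqN : N (p - ap 0) ≤ m := by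
    refine hq.le.trans ?_
    rw [ip_sub_left, ip_sub_right, ip_sub_right, ip_comm h.pd (ap 0) p, hpc0, hc0.2, hpk]
    push_cast; linarith
  set C : ℝ := N x - ip B x (p - ap 0) with hC
  have hlow : ∀ t : ℝ, 0 < t → m - C * (1 / t) ≤ ip B p (L t) := fun t ht => by
    have h1 := (hA t).ip_le h hq.D1 hqN
    change ip B (x + t • p) (p - ap 0) ≤ ip B (x + t • p) (L t) at h1
    have h2 : ip B x (L t) ≤ N x := by rw [ip_comm h.pd]; exact hLD t x
    have h3 : ip B p (p - ap 0) = m := by rw [ip_sub_right, hpk, hpc0]; push_cast; ring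
    rw [ip_add_left, ip_add_left, ip_smul_left, ip_smul_left, h3] at h1
    rw [mul_one_div, sub_le_iff_le_add, ← sub_le_iff_le_add', le_div_iff₀ ht]
    linarith
  have hcomp : IsCompact ({d | N d ≤ m} ∩ ({d | Trip B N d} ∩ {d | ip B d d ≤ m})) :=
    (h.norm.isCompact_ball m).inter_right
      ((Trip.isClosed h).inter (isClosed_le (continuous_ip_self B) continuous_const))
  obtain ⟨d, ⟨hdN, hd, hdd⟩, f, hf, hlim⟩ := hcomp.tendsto_subseq
    (x := fun i : ℕ => L ((i : ℝ) + 1))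
    fun i => ⟨hLN _, (hA _).psum_trip h m, (hA _).ip_psum_le h m⟩
  have hxd : ip B x p ≤ ip B x d :=
    ge_of_tendsto' (((continuous_ip_right B x).tendsto d).comp hlim) fun i =>
      hxp _ (by positivity)
  have hpd : (m : ℝ) ≤ ip B p d := by
    have h1 : Filter.Tendsto (fun i : ℕ => (m : ℝ) - C * (1 / ((f i : ℝ) + 1))) Filter.atTop
        (nhds (m - C * 0)) :=
      ((tendsto_one_div_add_atTop_nhds_zero_nat.comp hf.tendsto_atTop).const_mul C).const_sub _
    rw [mul_zero, sub_zero] at h1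
    exact le_of_tendsto_of_tendsto' h1 (((continuous_ip_right B p).tendsto d).comp hlim) fun i =>
      hlow _ (by positivity)
  have hdd' : ip B d d ≤ m := hdd
  have hpd' : ip B p d ≤ ip B d d := (hp.D1 d).trans hd.le
  have heq : ip B p d = ip B d d := le_antisymm hpd' (hdd'.trans hpd)
  have hddm : ip B d d = m := le_antisymm hdd' (hpd.trans hpd')
  have hc := hp.sub h D hd heq
  have hcc : ip B (p - d) (p - d) = 1 := by
    rw [ip_sub_left, ip_sub_right, ip_sub_right, ip_comm h.pd d p, heq, hddm, hpk]
    push_cast; ring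
  have hpc : ip B p (p - d) = 1 := by
    rw [ip_sub_right, heq, hddm, hpk]; push_cast; ring
  have := hx (p - d) ⟨hc.le.trans hcc.le, hcc⟩ hpc
  rw [ip_sub_right] at this
  linarith

/-! ### Splittings of a tripotent and subadditivity -/

/-- Splittings `q = p + (q - p)` of `q` into orthogonal tripotents whose difference
`p - (q - p)` is also in the dual unit ball. -/
structure Split (B : Matrix (Fin n) (Fin n) ℝ) (N : (Fin n → ℝ) → ℝ) (q p : Fin n → ℝ) :
    Prop where
  left : Trip B N p
  right : Trip B N (q - p)
  orth : ip B p (q - p) = 0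
  diff : D1 B N (p - (q - p))

namespace Split

variable {B : Matrix (Fin n) (Fin n) ℝ} {N : (Fin n → ℝ) → ℝ} {q p : Fin n → ℝ}

lemma symm (h : Setting B N) (hs : Split B N q p) : Split B N q (q - p) := by
  refine ⟨hs.right, by simpa using hs.left, ?_, ?_⟩
  · rw [sub_sub_cancel, ip_comm h.pd]; exact hs.orth
  · have := h.D1_neg hs.diff
    rw [neg_sub] at this
    rwa [sub_sub_cancel]

/-- An atom supported by one part is supported by `q`, hence orthogonal to the other part. -/
lemma ip_atom_right (h : Setting B N) (hs : Split B N q p) (hq : D1 B N q) {c : Fin n → ℝ}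
    (hc : Atom B N c) (hpc : ip B p c = 1) : ip B (q - p) c = 0 := by
  have h1 := hs.diff c
  have h2 := hq c
  rw [h.atom_norm hc] at h1 h2
  rw [ip_sub_left, hpc] at h1
  rw [ip_sub_left, hpc]
  rw [ip_sub_left, hpc] at h1
  linarith

/-- An atom supported by one part of a splitting can be moved to the other part. -/
lemma move (h : Setting B N) (D : DecompStruct B N) (hs : Split B N q p) (hq : D1 B N q)
    {c : Fin n → ℝ} (hc : Atom B N c) (hpc : ip B p c = 1) : Split B N q (p - c) := by
  have h0 := hs.ip_atom_right h hq hc hpc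
  have hqc : ip B q c = 1 := by rw [ip_sub_left] at h0; linarith
  obtain ⟨hpV, -⟩ := h.V_sub D hc hs.left.D1 hpc
  obtain ⟨hqV, -⟩ := h.V_sub D hc hq hqc
  have hV : q - p ∈ V D c := by
    have := (V D c).sub_mem hqV hpV
    rwa [sub_sub_sub_cancel_right] at this
  have hdc : ip B (p - (q - p)) c = 1 := by rw [ip_sub_left, h0, hpc, sub_zero]
  obtain ⟨hdV, hd1⟩ := h.V_sub D hc hs.diff hdc
  have e : q - (p - c) = c + (q - p) := by abel
  refine ⟨hs.left.sub_atom h D hc hpc, ?_, ?_, ?_⟩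
  · rw [e]
    refine ⟨h.V_add D hc hV hs.right.D1, ?_⟩
    have h1 := h.norm.triangle c (q - p)
    have h2 := hs.right.le
    rw [ip_add_left, ip_add_right, ip_add_right, ip_comm h.pd c (q - p), h0, hc.2]
    have h3 := hc.1
    linarith
  · rw [e, ip_add_right, ip_sub_left, ip_sub_left, hs.orth, hpc, hc.2, ip_comm h.pd c, h0]
    ring
  · have h1 := h.V_smul_add D hc hdV hd1 (s := -1) (by simp)
    have e' : p - c - (q - (p - c)) = (-1 : ℝ) • c + (p - (q - p) - c) := by
      rw [neg_one_smul]; abel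
    rwa [e']

lemma isCompact (h : Setting B N) (hq : Trip B N q) : IsCompact {p | Split B N q p} := by
  have hsub : Continuous fun p : Fin n → ℝ => q - p := by fun_prop
  have hdiff : Continuous fun p : Fin n → ℝ => p - (q - p) := by fun_prop
  have heq : {p | Split B N q p} = {p | N p ≤ N q} ∩ ({p | Trip B N p} ∩
      ((fun p => q - p) ⁻¹' {p | Trip B N p} ∩ ({p | ip B p (q - p) = 0} ∩
        (⋂ c, {p | ip B c (p - (q - p)) ≤ N c})))) := by
    ext p
    simp only [Set.mem_ofPred_eq, Set.mem_inter_iff, Set.mem_preimage, Set.mem_iInter]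
    constructor
    · intro hs
      refine ⟨?_, hs.left, hs.right, hs.orth, fun c => by rw [ip_comm h.pd]; exact hs.diff c⟩
      have h1 := hs.orth
      rw [ip_sub_right, sub_eq_zero] at h1
      rw [hs.left.N_eq, ← h1, ip_comm h.pd]
      -- `⟪p, p⟫ = ⟪p, q⟫ = ⟪q, q⟫ - ⟪q - p, q - p⟫`
      have h2 := ip_self_nonneg h.pd (q - p)
      rw [ip_sub_left, ip_sub_right, ip_sub_right, ip_comm h.pd p q] at h2
      rw [ip_comm h.pd p q] at h1
      rw [hq.N_eq]
      linarith
    · rintro ⟨-, h1, h2, h3, h4⟩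
      exact ⟨h1, h2, h3, fun c => by rw [ip_comm h.pd]; exact h4 c⟩
  rw [heq]
  have hip : Continuous fun p : Fin n → ℝ => ip B p (q - p) := by unfold ip; fun_prop
  exact (h.norm.isCompact_ball _).inter_right <| (Trip.isClosed h).inter <|
    ((Trip.isClosed h).preimage hsub).inter <| (isClosed_eq hip continuous_const).inter <|
      isClosed_iInter fun c => isClosed_le ((continuous_ip_right B c).comp hdiff) continuous_const

end Split

/-- The functional `⟪w, ·⟫` is positive on the atoms supported by the tripotent `e w`. -/
lemma Frame.ip_pos {B : Matrix (Fin n) (Fin n) ℝ} {N : (Fin n → ℝ) → ℝ} (h : Setting B N)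
    {U : Submodule ℝ (Fin n → ℝ)} {w : Fin n → ℝ} {a : ℕ → Fin n → ℝ} {γ : ℕ → ℝ} {R : ℕ}
    (hF : Frame B N U w a γ R) {c : Fin n → ℝ} (hc : Atom B N c)
    (hqc : ip B (psum a R) c = 1) : 0 < ip B w c := by
  have h0 : ∀ i ∈ Finset.range R, 0 ≤ ip B (a i) c := fun i hi => by
    have h1 := hF.dual R (fun j => if j = i then 0 else 1) (fun j => by split_ifs <;> simp) c
    have h2 : ∑ j ∈ Finset.range R, (if j = i then (0 : ℝ) else 1) • a j = psum a R - a i := by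
      have h3 : ∀ j, (if j = i then (0 : ℝ) else 1) • a j = a j - if j = i then a j else 0 :=
        fun j => by split_ifs <;> simp
      simp only [h3, psum, Finset.sum_sub_distrib, Finset.sum_ite_eq', if_pos hi]
    rw [h2, ip_sub_left, hqc, h.atom_norm hc] at h1
    linarith
  have h1 : ip B w c = ∑ i ∈ Finset.range R, γ i * ip B (a i) c := by
    conv_lhs => rw [← hF.sum_eq]
    rw [ip_sum_left]
    exact Finset.sum_congr rfl fun i _ => ip_smul_left _ _ _ _
  rw [psum, ip_sum_left] at hqc
  rw [h1]
  obtain ⟨i, hi, hpos⟩ : ∃ i ∈ Finset.range R, 0 < ip B (a i) c := by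
    by_contra! hcon
    have := Finset.sum_nonpos hcon
    linarith
  exact Finset.sum_pos' (fun j hj => mul_nonneg (hF.γ_nonneg j) (h0 j hj))
    ⟨i, hi, mul_pos (hF.γ_pos i (Finset.mem_range.1 hi)) hpos⟩

/-- Among the splittings `e (x + y) = p + (q - p)` take one maximizing `⟪x - y, p⟫`.  Since moving an
atom to the other part does not increase this value, `⟪x, ·⟫` is positive on the atoms supported by
`p` and `⟪y, ·⟫` on those supported by `q - p`. -/
lemma Setting.Kfun_add_le {B : Matrix (Fin n) (Fin n) ℝ} {N : (Fin n → ℝ) → ℝ}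
    (h : Setting B N) (D : DecompStruct B N) (x y : Fin n → ℝ) :
    Kfun B N D (x + y) ≤ Kfun B N D x + Kfun B N D y := by
  obtain ⟨a, γ, R, hF⟩ := h.exists_frame D Setting.good_top (x := x + y) Submodule.mem_top
  set q := psum a R with hqdef
  have hq : Trip B N q := hF.psum_trip h R
  have hne : {p | Split B N q p}.Nonempty := by
    refine ⟨q, hq, ?_, ?_, ?_⟩
    · rw [sub_self]; exact ⟨h.D1_zero, by rw [h.norm.map_zero, ip_zero_left]⟩
    · rw [sub_self, ip_zero_right]
    · rw [sub_self, sub_zero]; exact hq.D1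
  obtain ⟨p, hp, hmax⟩ := (Split.isCompact h hq).exists_isMaxOn hne
    (continuous_ip_right B (x - y)).continuousOn
  have hp : Split B N q p := hp
  have h1 : ip B p p ≤ Kfun B N D x := by
    refine hp.left.le_Kfun h D fun c hc hpc => ?_
    have h2 := hp.ip_atom_right h hq.D1 hc hpc
    have h3 : ip B (x - y) (p - c) ≤ ip B (x - y) p := hmax (hp.move h D hq.D1 hc hpc)
    have h4 := hF.ip_pos h hc (by rw [ip_sub_left] at h2; linarith)
    rw [ip_sub_right, ip_sub_left B x y c] at h3
    rw [ip_add_left] at h4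
    linarith
  have h2 : ip B (q - p) (q - p) ≤ Kfun B N D y := by
    refine hp.right.le_Kfun h D fun c hc hpc => ?_
    have hs := hp.symm h
    have h2 := hs.ip_atom_right h hq.D1 hc hpc
    have h3 : ip B (x - y) (q - (q - p - c)) ≤ ip B (x - y) p :=
      hmax ((hs.move h D hq.D1 hc hpc).symm h)
    have h4 := hF.ip_pos h hc (by rw [ip_sub_left] at h2; linarith)
    have e : q - (q - p - c) = p + c := by abel
    rw [e, ip_add_right, ip_sub_left B x y c] at h3
    rw [ip_add_left] at h4
    linarith
  have h3 : ip B q q = ip B p p + ip B (q - p) (q - p) := by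
    have := hp.orth
    have h4 : ip B (q - p) p = 0 := by rw [ip_comm h.pd]; exact this
    calc ip B q q = ip B (p + (q - p)) (p + (q - p)) := by rw [add_sub_cancel]
      _ = _ := by rw [ip_add_left, ip_add_right, ip_add_right, this, h4]; ring
  rw [hF.Kfun_eq h D, ← hF.ip_psum_R h, ← hqdef, h3]
  exact add_le_add h1 h2

/-- **Sublinearity of K.**
For a decomposable norm all of whose unit-ball extreme points have unit `‖·‖ᵤ`-norm,
the function `K(x) = ‖e x‖ᵤ²` is sublinear: `K (x + y) ≤ K x + K y`. -/
theorem Kfun_sublinear {n : ℕ}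
    (B : Matrix (Fin n) (Fin n) ℝ) (hB : B.PosDef)
    (N : (Fin n → ℝ) → ℝ) (hN : IsNorm N)
    (hExt : ∀ a ∈ extPts N, normu B a = 1)
    (D : DecompStruct B N) :
    ∀ x y : Fin n → ℝ, Kfun B N D (x + y) ≤ Kfun B N D x + Kfun B N D y := by
  exact Setting.Kfun_add_le ⟨hB, hN, hExt⟩ D

end PGH
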